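/- For all a, b ∈ ℝ, 2 I_β(a,b) + φ^β(a,b) + φ^β(b,a) = (1/2) ∫_a^b ∫_a^b β''(μ−σ) ( g(μ) − g(σ) )² dμ dσ. -/

import Mathlib

open MeasureTheory Set in
lemma tri_le (K : ℝ → ℝ → ℝ) (hK : Continuous (Function.uncurry K))
    (hs : ∀ x y, K x y = K y x) (a b : ℝ) (hab : a ≤ b) :
    (∫ x in a..b, ∫ y in a..x, K x y) = ∫ x in a..b, ∫ y in x..b, K x y := by
  rw [intervalIntegral.integral_of_le hab, intervalIntegral.integral_of_le hab]
  have h1 : (∫ x in Ioc a b, ∫ y in a..x, K x y)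
      = ∫ x in Ioc a b, ∫ y in Ioc a b, {p : ℝ × ℝ | p.2 ≤ p.1}.indicator (Function.uncurry K) (x, y) := by
    refine setIntegral_congr_fun measurableSet_Ioc fun x hx => ?_
    have : (fun y => {p : ℝ × ℝ | p.2 ≤ p.1}.indicator (Function.uncurry K) (x, y))
        = (Iic x).indicator (K x) := by
      ext y; simp [indicator, Function.uncurry]
    simp only [this]
    rw [setIntegral_indicator measurableSet_Iic, intervalIntegral.integral_of_le hx.1.le,
      Ioc_inter_Iic, min_eq_right hx.2]
  have h2 : (∫ x in Ioc a b, ∫ y in x..b, K x y)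
      = ∫ x in Ioc a b, ∫ y in Ioc a b, {p : ℝ × ℝ | p.2 ≤ p.1}.indicator (Function.uncurry K) (y, x) := by
    refine setIntegral_congr_fun measurableSet_Ioc fun x hx => ?_
    have : (fun y => {p : ℝ × ℝ | p.2 ≤ p.1}.indicator (Function.uncurry K) (y, x))
        = (Ici x).indicator (K x) := by
      ext y; simp [indicator, Function.uncurry, hs x y]
    simp only [this]
    have h3 : Ioc a b ∩ Ici x = Icc x b := by
      ext y; have := hx.1; simp only [mem_inter_iff, mem_Ioc, mem_Ici, mem_Icc]
      constructor
      · rintro ⟨⟨_, h⟩, h'⟩; exact ⟨h', h⟩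
      · rintro ⟨h, h'⟩; exact ⟨⟨by linarith, h'⟩, h⟩
    rw [setIntegral_indicator measurableSet_Ici, intervalIntegral.integral_of_le hx.2, h3,
      integral_Icc_eq_integral_Ioc]
  rw [h1, h2]
  refine integral_integral_swap (f := fun x y => {p : ℝ × ℝ | p.2 ≤ p.1}.indicator (Function.uncurry K) (x, y)) ?_
  have hm : MeasurableSet {p : ℝ × ℝ | p.2 ≤ p.1} := measurableSet_le measurable_snd measurable_fst
  change Integrable ({p : ℝ × ℝ | p.2 ≤ p.1}.indicator (Function.uncurry K)) _
  refine Integrable.indicator ?_ hm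
  rw [Measure.prod_restrict]
  exact (hK.continuousOn.integrableOn_compact (isCompact_Icc.prod isCompact_Icc)).mono_set
    (prod_mono Ioc_subset_Icc_self Ioc_subset_Icc_self)

lemma tri (K : ℝ → ℝ → ℝ) (hK : Continuous (Function.uncurry K))
    (hs : ∀ x y, K x y = K y x) (a b : ℝ) :
    (∫ x in a..b, ∫ y in a..x, K x y) = ∫ x in a..b, ∫ y in x..b, K x y := by
  rcases le_total a b with h | h
  · exact tri_le K hK hs a b h
  · have := tri_le K hK hs b a h
    have e1 : (∫ x in a..b, ∫ y in a..x, K x y) = ∫ x in b..a, ∫ y in x..a, K x y := by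
      rw [intervalIntegral.integral_symm, ← intervalIntegral.integral_neg]
      simp_rw [← intervalIntegral.integral_symm]
    have e2 : (∫ x in a..b, ∫ y in x..b, K x y) = ∫ x in b..a, ∫ y in b..x, K x y := by
      rw [intervalIntegral.integral_symm, ← intervalIntegral.integral_neg]
      simp_rw [← intervalIntegral.integral_symm]
    rw [e1, e2, this]

lemma tri2 (K : ℝ → ℝ → ℝ) (hK : Continuous (Function.uncurry K))
    (hs : ∀ x y, K x y = K y x) (a b : ℝ) :
    (∫ x in a..b, ∫ y in a..b, K x y) = 2 * ∫ x in a..b, ∫ y in a..x, K x y := by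
  have hx : ∀ x, Continuous (K x) := fun x => hK.comp (by fun_prop : Continuous fun y => (x, y))
  have hc : ∀ c, Continuous fun x => ∫ y in c..x, K x y := fun c =>
    intervalIntegral.continuous_parametric_intervalIntegral_of_continuous hK continuous_id
  have hc2 : Continuous fun x => ∫ y in x..b, K x y := by
    refine (hc b).neg.congr fun x => ?_
    exact (intervalIntegral.integral_symm _ _).symm
  have : ∀ x, (∫ y in a..b, K x y) = (∫ y in a..x, K x y) + ∫ y in x..b, K x y := fun x =>
    (intervalIntegral.integral_add_adjacent_intervals ((hx x).intervalIntegrable _ _)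
      ((hx x).intervalIntegrable _ _)).symm
  simp_rw [this]
  rw [intervalIntegral.integral_add ((hc a).intervalIntegrable _ _) (hc2.intervalIntegrable _ _),
    ← tri K hK hs]
  ring

/-- With `β` a `C²` even function and `g` continuous, setting
`I_β(a,b) = ∫_a^b (∫_μ^a β''(μ-σ) g σ dσ) g μ dμ` and
`φ^β(a,b) = ∫_b^a β'(σ-b) (g σ)² dσ`, one has
`2 I_β(a,b) + φ^β(a,b) + φ^β(b,a) = (1/2) ∫_a^b ∫_a^b β''(μ-σ) (g μ - g σ)² dμ dσ`. -/
theorem stmt5 (β : ℝ → ℝ) (hβC2 : ContDiff ℝ 2 β) (hβeven : ∀ r : ℝ, β (-r) = β r)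
    (g : ℝ → ℝ) (hg : Continuous g) :
    ∀ a b : ℝ,
      2 * (∫ μ in a..b, (∫ σ in μ..a, deriv (deriv β) (μ - σ) * g σ) * g μ)
          + (∫ σ in b..a, deriv β (σ - b) * (g σ) ^ 2)
          + (∫ σ in a..b, deriv β (σ - a) * (g σ) ^ 2)
        = (1 / 2) * ∫ σ in a..b, ∫ μ in a..b, deriv (deriv β) (μ - σ) * (g μ - g σ) ^ 2 := by
  intro a b
  have hd1 : ContDiff ℝ 1 (deriv β) := by
    have h : ContDiff ℝ (1 + 1) β := by simpa [one_add_one_eq_two] using hβC2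
    exact (contDiff_succ_iff_deriv.1 h).2.2
  have hc1 : Continuous (deriv β) := hd1.continuous
  have hc2 : Continuous (deriv (deriv β)) := hd1.continuous_deriv le_rfl
  have hD : ∀ x, HasDerivAt (deriv β) (deriv (deriv β) x) x := fun x =>
    (hd1.differentiable one_ne_zero x).hasDerivAt
  have hodd : ∀ x, deriv β (-x) = - deriv β x := by
    intro x
    have h : (fun r => β (-r)) = β := funext hβeven
    have h2 := deriv_comp_neg β x
    rw [h] at h2
    linarith
  have heven : ∀ x, deriv (deriv β) (-x) = deriv (deriv β) x := by
    intro x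
    have h : (fun r => deriv β (-r)) = fun r => - deriv β r := funext hodd
    have h2 := deriv_comp_neg (deriv β) x
    rw [h, deriv.fun_neg] at h2
    linarith
  have hsw : ∀ x y, deriv (deriv β) (x - y) = deriv (deriv β) (y - x) := fun x y => by
    rw [← heven, neg_sub]
  generalize hB : deriv (deriv β) = B at *
  generalize hA : deriv β = A at *
  have hint : ∀ σ, (∫ μ in a..b, B (μ - σ)) = A (b - σ) - A (a - σ) := by
    intro σ
    rw [intervalIntegral.integral_comp_sub_right (fun x => B x) σ]
    exact intervalIntegral.integral_eq_sub_of_hasDerivAt (fun x _ => hD x)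
      (hc2.intervalIntegrable _ _)
  set K : ℝ → ℝ → ℝ := fun x y => B (x - y) * g x * g y with hKdef
  have hK : Continuous (Function.uncurry K) := by
    simp only [hKdef, Function.uncurry_def]; fun_prop
  have hKs : ∀ x y, K x y = K y x := fun x y => by
    simp only [hKdef]; rw [hsw x y]; ring
  set P : ℝ → ℝ → ℝ := fun σ μ => B (μ - σ) * g μ ^ 2 with hPdef
  have hP : Continuous (Function.uncurry P) := by
    simp only [hPdef, Function.uncurry_def]; fun_prop
  set J := ∫ σ in a..b, (A (σ - a) - A (σ - b)) * g σ ^ 2 with hJ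
  have hQ : (∫ σ in a..b, ∫ μ in a..b, P μ σ) = J := by
    rw [hJ]
    congr 1; ext σ
    simp only [hPdef]
    rw [intervalIntegral.integral_mul_const]
    simp_rw [hsw σ]
    rw [hint, ← neg_sub σ b, ← neg_sub σ a, hodd, hodd]
    ring
  have hP' : (∫ σ in a..b, ∫ μ in a..b, P σ μ) = J := by
    rw [← hQ]
    refine MeasureTheory.intervalIntegral_intervalIntegral_swap ?_
    exact (hP.continuousOn.integrableOn_compact (isCompact_uIcc.prod isCompact_uIcc)).mono_set
      (Set.prod_mono Set.uIoc_subset_uIcc Set.uIoc_subset_uIcc)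
  have hI : (∫ μ in a..b, (∫ σ in μ..a, B (μ - σ) * g σ) * g μ)
      = - ∫ x in a..b, ∫ y in a..x, K x y := by
    rw [← intervalIntegral.integral_neg]
    congr 1; ext x
    rw [← intervalIntegral.integral_symm, ← intervalIntegral.integral_mul_const]
    congr 1; ext y
    simp only [hKdef]; ring
  have hφ : (∫ σ in b..a, A (σ - b) * (g σ) ^ 2) + (∫ σ in a..b, A (σ - a) * (g σ) ^ 2) = J := by
    rw [intervalIntegral.integral_symm, neg_add_eq_sub, hJ,
      ← intervalIntegral.integral_sub (by apply Continuous.intervalIntegrable; fun_prop)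
        (by apply Continuous.intervalIntegrable; fun_prop)]
    congr 1; ext σ; ring
  have hPσ : ∀ (F : ℝ → ℝ → ℝ), Continuous (Function.uncurry F) →
      Continuous (fun x => ∫ y in a..b, F x y) := fun F hF =>
    intervalIntegral.continuous_parametric_intervalIntegral_of_continuous' hF a b
  have hQc : Continuous (Function.uncurry fun x y => P y x) := by
    simp only [hPdef, Function.uncurry_def]; fun_prop
  have hrow : ∀ (F : ℝ → ℝ → ℝ), Continuous (Function.uncurry F) → ∀ x,
      IntervalIntegrable (F x) MeasureTheory.volume a b := fun F hF x =>
    (hF.comp (by fun_prop : Continuous fun y => (x, y))).intervalIntegrable _ _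
  have hR : (∫ σ in a..b, ∫ μ in a..b, B (μ - σ) * (g μ - g σ) ^ 2)
      = J + J - 2 * ∫ x in a..b, ∫ y in a..b, K x y := by
    have : ∀ σ, (∫ μ in a..b, B (μ - σ) * (g μ - g σ) ^ 2)
        = (∫ μ in a..b, P σ μ) + (∫ μ in a..b, P μ σ) - 2 * ∫ μ in a..b, K σ μ := by
      intro σ
      rw [← intervalIntegral.integral_const_mul,
        ← intervalIntegral.integral_add (hrow P hP σ) (hrow _ hQc σ),
        ← intervalIntegral.integral_sub ((hrow P hP σ).add (hrow _ hQc σ)) ((hrow K hK σ).const_mul 2)]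
      congr 1; ext μ
      simp only [hPdef, hKdef]
      rw [hsw σ μ]; ring
    simp_rw [this]
    have i1 := (hPσ P hP).intervalIntegrable (μ := MeasureTheory.volume) a b
    have i2 := (hPσ _ hQc).intervalIntegrable (μ := MeasureTheory.volume) a b
    have i3 := (hPσ K hK).intervalIntegrable (μ := MeasureTheory.volume) a b
    rw [intervalIntegral.integral_sub (i1.add i2) (i3.const_mul 2),
      intervalIntegral.integral_add i1 i2, intervalIntegral.integral_const_mul, hP', hQ]
  rw [hI, hR, tri2 K hK hKs, add_assoc, hφ]
  ring
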